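/- Let H₁ and H₂ be complex Hilbert spaces, let T : H₁ → H₂ be a densely defined, closed linear operator with adjoint T* : H₂ → H₁, and let L be a finite-dimensional subspace of H₂ with L ⊆ dom(T*). Regard the closed subspace L^⊥ as a Hilbert space, and define S : L^⊥ → H₁ as the restriction of T* to dom(S) = dom(T*) ∩ L^⊥. Then S is densely defined and closed, and its adjoint S* : H₁ → L^⊥ satisfies dom(S*) = dom(T) and S*f = P_{L^⊥}(Tf) for all f ∈ dom(T), where P_{L^⊥} is the orthogonal projection of H₂ onto L^⊥. -/

import Mathlib

open scoped LinearPMap InnerProductSpace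

/-- The restriction `S` of the adjoint `T* : H₂ →ₗ. H₁` to `dom T* ∩ Lᗮ`, regarded as a
(partially defined) operator from the Hilbert space `Lᗮ` to `H₁`. -/
noncomputable def adjointRestrict
    {H₁ H₂ : Type*}
    [NormedAddCommGroup H₁] [InnerProductSpace ℂ H₁] [CompleteSpace H₁]
    [NormedAddCommGroup H₂] [InnerProductSpace ℂ H₂] [CompleteSpace H₂]
    (T : H₁ →ₗ.[ℂ] H₂) (L : Submodule ℂ H₂) : ↥Lᗮ →ₗ.[ℂ] H₁ where
  domain := T.adjoint.domain.comap Lᗮ.subtype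
  toFun := T.adjoint.toFun.comp (Lᗮ.subtype.restrict fun _ hx => hx)

/-!
A closed operator `A` is bounded on any complete subspace `L ⊆ dom A`, by the closed graph theorem.
So if `f` is in the domain of the adjoint of `A|_{Lᗮ}`, both terms of
`⟪f, A a⟫ = ⟪f, A (P_{Lᗮ} a)⟫ + ⟪f, A (P_L a)⟫` are bounded in `a`, that is, `f ∈ dom A†`.
Hence `(A|_{Lᗮ})† = P_{Lᗮ} ∘ A†`, and for `A = T†` von Neumann's theorem `T†† = T` finishes.
-/

section Biadjoint

variable {𝕜 E F : Type*} [RCLike 𝕜]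
  [NormedAddCommGroup E] [InnerProductSpace 𝕜 E] [NormedAddCommGroup F] [InnerProductSpace 𝕜 F]

theorem mem_submodule_adjoint_iff_mem_orthogonal (g : Submodule 𝕜 (E × F)) (a : F) (b : E) :
    (a, b) ∈ g.adjoint ↔
      WithLp.toLp 2 (-b, a) ∈ (g.comap (WithLp.linearEquiv 2 𝕜 (E × F)).toLinearMap)ᗮ := by
  rw [Submodule.mem_adjoint_iff, Submodule.mem_orthogonal]
  have inner_eq (p : E) (q : F) :
      ⟪WithLp.toLp 2 (p, q), WithLp.toLp 2 (-b, a)⟫_𝕜 = ⟪q, a⟫_𝕜 - ⟪p, b⟫_𝕜 := by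
    rw [WithLp.prod_inner_apply]
    simp only [inner_neg_right]
    ring
  exact ⟨fun h w hw => (inner_eq w.fst w.snd).trans (h w.fst w.snd hw),
    fun h p q hpq => (inner_eq p q).symm.trans (h (WithLp.toLp 2 (p, q)) hpq)⟩

variable [CompleteSpace E] [CompleteSpace F]

theorem submodule_adjoint_adjoint (g : Submodule 𝕜 (E × F)) :
    g.adjoint.adjoint = g.topologicalClosure := by
  let G : Submodule 𝕜 (WithLp 2 (E × F)) :=
    g.comap (WithLp.linearEquiv 2 𝕜 (E × F)).toLinearMap
  ext ⟨x, y⟩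
  have inner_eq (a : F) (b : E) :
      ⟪WithLp.toLp 2 (-b, a), WithLp.toLp 2 (x, y)⟫_𝕜 = -(⟪b, x⟫_𝕜 - ⟪a, y⟫_𝕜) := by
    rw [WithLp.prod_inner_apply]
    simp only [inner_neg_left]
    ring
  calc (x, y) ∈ g.adjoint.adjoint
    _ ↔ ∀ a b, WithLp.toLp 2 (-b, a) ∈ Gᗮ →
          ⟪WithLp.toLp 2 (-b, a), WithLp.toLp 2 (x, y)⟫_𝕜 = 0 := by
      simp only [Submodule.mem_adjoint_iff g.adjoint, mem_submodule_adjoint_iff_mem_orthogonal,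
        inner_eq, neg_eq_zero, G]
    _ ↔ ∀ w ∈ Gᗮ, ⟪w, WithLp.toLp 2 (x, y)⟫_𝕜 = 0 := by
      refine ⟨fun h w hw => ?_, fun h a b => h _⟩
      have rotate : WithLp.toLp 2 (-(-w.fst), w.snd) = w := by rw [neg_neg]; rfl
      rw [← rotate] at hw ⊢
      exact h _ _ hw
    _ ↔ WithLp.toLp 2 (x, y) ∈ Gᗮᗮ := (Submodule.mem_orthogonal _ _).symm
    _ ↔ WithLp.toLp 2 (x, y) ∈ closure (G : Set (WithLp 2 (E × F))) := by
      rw [Submodule.orthogonal_orthogonal_eq_closure, ← SetLike.mem_coe,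
        Submodule.topologicalClosure_coe]
    _ ↔ (x, y) ∈ g.topologicalClosure :=
      (Set.ext_iff.1 ((WithLp.prodContinuousLinearEquiv 2 𝕜 E F).toHomeomorph.preimage_closure g)
        (WithLp.toLp 2 (x, y))).symm

variable {T : E →ₗ.[𝕜] F}

theorem linearPMap_graph_adjoint_adjoint (hd : Dense (T.domain : Set E)) (hc : T.IsClosed) :
    T†.graph.adjoint = T.graph := by
  rw [LinearPMap.adjoint_graph_eq_graph_adjoint hd, submodule_adjoint_adjoint,
    IsClosed.submodule_topologicalClosure_eq hc]

theorem dense_adjoint_domain (hd : Dense (T.domain : Set E)) (hc : T.IsClosed) :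
    Dense (T†.domain : Set F) := by
  rw [Submodule.dense_iff_topologicalClosure_eq_top, Submodule.topologicalClosure_eq_top_iff,
    Submodule.eq_bot_iff]
  intro y hy
  have zero_mem_graph : ((0 : E), y) ∈ T.graph := by
    rw [← linearPMap_graph_adjoint_adjoint hd hc, Submodule.mem_adjoint_iff]
    intro a b hab
    rw [inner_zero_right, zero_sub, neg_eq_zero]
    exact (Submodule.mem_orthogonal _ _).1 hy a (LinearPMap.mem_domain_of_mem_graph hab)
  exact T.graph_fst_eq_zero_snd zero_mem_graph rfl

theorem linearPMap_adjoint_adjoint (hd : Dense (T.domain : Set E)) (hc : T.IsClosed) :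
    T†† = T := by
  apply LinearPMap.eq_of_eq_graph
  rw [LinearPMap.adjoint_graph_eq_graph_adjoint (dense_adjoint_domain hd hc),
    linearPMap_graph_adjoint_adjoint hd hc]

end Biadjoint

theorem linearPMap_continuous_comp_inclusion {𝕜 E F : Type*} [NontriviallyNormedField 𝕜]
    [NormedAddCommGroup E] [NormedSpace 𝕜 E] [NormedAddCommGroup F] [NormedSpace 𝕜 F]
    [CompleteSpace F] {A : E →ₗ.[𝕜] F} (hc : A.IsClosed) {L : Submodule 𝕜 E} [CompleteSpace L]
    (hL : L ≤ A.domain) : Continuous (A.toFun.comp (Submodule.inclusion hL)) := by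
  have graph_eq_preimage : ((A.toFun.comp (Submodule.inclusion hL)).graph : Set (L × F)) =
      Prod.map Subtype.val id ⁻¹' A.graph := by
    ext ⟨u, z⟩
    rw [SetLike.mem_coe, LinearMap.mem_graph_iff, Set.mem_preimage, SetLike.mem_coe,
      LinearPMap.mem_graph_iff]
    constructor
    · intro hz
      exact ⟨⟨u, hL u.2⟩, rfl, hz.symm⟩
    · rintro ⟨⟨_, ha⟩, rfl, hz⟩
      exact hz.symm
  apply LinearMap.continuous_of_isClosed_graph
  rw [graph_eq_preimage]
  exact hc.preimage (continuous_subtype_val.prodMap continuous_id)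

/-- The restriction of a partially defined operator `A` on `E` to `dom A ∩ M`, regarded as a
partially defined operator on the subspace `M` (unlike `LinearPMap.domRestrict`, which remains an
operator on `E`). -/
def restrictToSubmodule {R E F : Type*} [Ring R] [AddCommGroup E] [Module R E]
    [AddCommGroup F] [Module R F] (A : E →ₗ.[R] F) (M : Submodule R E) : M →ₗ.[R] F where
  domain := A.domain.comap M.subtype
  toFun := A.toFun.comp (M.subtype.restrict fun _ hx => hx)

namespace restrictToSubmodule

theorem graph_eq_comap {R E F : Type*} [Ring R] [AddCommGroup E] [Module R E]
    [AddCommGroup F] [Module R F] (A : E →ₗ.[R] F) (M : Submodule R E) :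
    (restrictToSubmodule A M).graph = A.graph.comap (M.subtype.prodMap LinearMap.id) := by
  ext ⟨u, z⟩
  simp only [Submodule.mem_comap, LinearPMap.mem_graph_iff]
  constructor
  · rintro ⟨x, rfl, rfl⟩
    exact ⟨⟨x, x.2⟩, rfl, rfl⟩
  · rintro ⟨⟨_, ha⟩, rfl, hz⟩
    exact ⟨⟨u, ha⟩, rfl, hz⟩

theorem isClosed {R E F : Type*} [CommRing R] [AddCommGroup E] [Module R E] [TopologicalSpace E]
    [AddCommGroup F] [Module R F] [TopologicalSpace F] {A : E →ₗ.[R] F} (hc : A.IsClosed)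
    (M : Submodule R E) : (restrictToSubmodule A M).IsClosed := by
  rw [LinearPMap.IsClosed, graph_eq_comap]
  exact hc.preimage (continuous_subtype_val.prodMap continuous_id)

section Adjoint

variable {𝕜 E F : Type*} [RCLike 𝕜] [NormedAddCommGroup E] [InnerProductSpace 𝕜 E]
  [NormedAddCommGroup F] [InnerProductSpace 𝕜 F] {A : E →ₗ.[𝕜] F} {L : Submodule 𝕜 E}

theorem orthogonalProjectionOnto_mem_domain [L.HasOrthogonalProjection] (hL : L ≤ A.domain)
    {a : E} (ha : a ∈ A.domain) :
    Lᗮ.orthogonalProjectionOnto a ∈ (restrictToSubmodule A Lᗮ).domain := by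
  change Lᗮ.starProjection a ∈ A.domain
  rw [Submodule.starProjection_orthogonal_val]
  exact A.domain.sub_mem ha (hL (L.starProjection_apply_mem a))

theorem dense_domain_orthogonal [L.HasOrthogonalProjection] (hd : Dense (A.domain : Set E))
    (hL : L ≤ A.domain) : Dense ((restrictToSubmodule A Lᗮ).domain : Set Lᗮ) := by
  have projection_surjective : Function.Surjective Lᗮ.orthogonalProjectionOnto := fun u =>
    ⟨u, Lᗮ.orthogonalProjectionOnto_mem_subspace_eq_self u⟩
  exact projection_surjective.denseRange.dense_of_mapsTo
    Lᗮ.orthogonalProjectionOnto.continuous hd fun _ ha => orthogonalProjectionOnto_mem_domain hL ha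

theorem isFormalAdjoint {B : F →ₗ.[𝕜] E} (h : A.IsFormalAdjoint B) (M : Submodule 𝕜 E)
    [M.HasOrthogonalProjection] :
    (restrictToSubmodule A M).IsFormalAdjoint
      (M.orthogonalProjectionOnto.toLinearMap.compPMap B) := fun x y =>
  (h ⟨x, x.2⟩ y).trans (M.inner_orthogonalProjectionOnto_eq_of_mem_left x (B y)).symm

theorem apply_eq_add_orthogonal [L.HasOrthogonalProjection] (hL : L ≤ A.domain) (a : A.domain) :
    A a = restrictToSubmodule A Lᗮ
        ⟨Lᗮ.orthogonalProjectionOnto a, orthogonalProjectionOnto_mem_domain hL a.2⟩ +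
      A (Submodule.inclusion hL (L.orthogonalProjectionOnto a)) := by
  have decomposition : a =
      ⟨Lᗮ.starProjection a, orthogonalProjectionOnto_mem_domain hL a.2⟩ +
        Submodule.inclusion hL (L.orthogonalProjectionOnto a) :=
    Subtype.ext <| by
      rw [add_comm]
      exact (L.starProjection_add_starProjection_orthogonal a).symm
  exact (congrArg A decomposition).trans (A.map_add _ _)

variable [CompleteSpace E] [CompleteSpace F] [CompleteSpace L]

theorem adjoint_domain_orthogonal_le (hd : Dense (A.domain : Set E)) (hc : A.IsClosed)
    (hL : L ≤ A.domain) : (restrictToSubmodule A Lᗮ)†.domain ≤ A†.domain := by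
  intro f hf
  obtain ⟨B, hB⟩ : ∃ B : L →L[𝕜] F, ∀ l, B l = A (Submodule.inclusion hL l) :=
    ⟨⟨A.toFun.comp (Submodule.inclusion hL), linearPMap_continuous_comp_inclusion hc hL⟩,
      fun _ => rfl⟩
  let g : Lᗮ := (restrictToSubmodule A Lᗮ)† ⟨f, hf⟩
  refine LinearPMap.mem_adjoint_domain_of_exists f ⟨g + B.adjoint f, fun a => ?_⟩
  have inner_g : ⟪(g : E), a⟫_𝕜 = ⟪f, restrictToSubmodule A Lᗮ
      ⟨Lᗮ.orthogonalProjectionOnto a, orthogonalProjectionOnto_mem_domain hL a.2⟩⟫_𝕜 := by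
    rw [← Submodule.inner_orthogonalProjectionOnto_eq_of_mem_left]
    exact LinearPMap.adjoint_isFormalAdjoint (T := restrictToSubmodule A Lᗮ)
      (dense_domain_orthogonal hd hL) ⟨f, hf⟩ ⟨_, orthogonalProjectionOnto_mem_domain hL a.2⟩
  have inner_B : ⟪(B.adjoint f : E), a⟫_𝕜 =
      ⟪f, A (Submodule.inclusion hL (L.orthogonalProjectionOnto a))⟫_𝕜 := by
    rw [← Submodule.inner_orthogonalProjectionOnto_eq_of_mem_left,
      ContinuousLinearMap.adjoint_inner_left, hB]
  rw [inner_add_left, inner_g, inner_B, ← inner_add_right, ← apply_eq_add_orthogonal hL a]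

theorem adjoint_orthogonal_eq_compPMap (hd : Dense (A.domain : Set E)) (hc : A.IsClosed)
    (hL : L ≤ A.domain) :
    (restrictToSubmodule A Lᗮ)† = Lᗮ.orthogonalProjectionOnto.toLinearMap.compPMap A† := by
  have le_adjoint :
      Lᗮ.orthogonalProjectionOnto.toLinearMap.compPMap A† ≤ (restrictToSubmodule A Lᗮ)† :=
    (isFormalAdjoint (LinearPMap.adjoint_isFormalAdjoint hd).symm Lᗮ).le_adjoint
      (dense_domain_orthogonal hd hL)
  exact (LinearPMap.eq_of_le_of_domain_eq le_adjoint
    (le_adjoint.1.antisymm (adjoint_domain_orthogonal_le hd hc hL))).symm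

end Adjoint

end restrictToSubmodule

theorem adjointRestrict_adjoint_general {𝕜 E F : Type*} [RCLike 𝕜]
    [NormedAddCommGroup E] [InnerProductSpace 𝕜 E] [CompleteSpace E]
    [NormedAddCommGroup F] [InnerProductSpace 𝕜 F] [CompleteSpace F]
    (T : E →ₗ.[𝕜] F) (hd : Dense (T.domain : Set E)) (hc : T.IsClosed)
    (L : Submodule 𝕜 F) [CompleteSpace L] (hL : L ≤ T†.domain) :
    Dense ((restrictToSubmodule T† Lᗮ).domain : Set Lᗮ) ∧
    (restrictToSubmodule T† Lᗮ).IsClosed ∧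
    (restrictToSubmodule T† Lᗮ)†.domain = T.domain ∧
    ∀ (f : E) (hf : f ∈ T.domain) (hf' : f ∈ (restrictToSubmodule T† Lᗮ)†.domain),
      (restrictToSubmodule T† Lᗮ)† ⟨f, hf'⟩ = Lᗮ.orthogonalProjectionOnto (T ⟨f, hf⟩) := by
  have adjoint_dense : Dense (T†.domain : Set F) := dense_adjoint_domain hd hc
  have adjoint_closed : T†.IsClosed := LinearPMap.adjoint_isClosed hd
  have adjoint_eq :
      (restrictToSubmodule T† Lᗮ)† = Lᗮ.orthogonalProjectionOnto.toLinearMap.compPMap T := by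
    rw [restrictToSubmodule.adjoint_orthogonal_eq_compPMap adjoint_dense adjoint_closed hL,
      linearPMap_adjoint_adjoint hd hc]
  obtain ⟨domain_eq, apply_eq⟩ := LinearPMap.ext_iff.1 adjoint_eq
  exact ⟨restrictToSubmodule.dense_domain_orthogonal adjoint_dense hL,
    restrictToSubmodule.isClosed adjoint_closed Lᗮ, domain_eq,
    fun f hf hf' => apply_eq (x := f) (hf := hf') (hg := hf)⟩

/-- Let `T : H₁ → H₂` be densely defined and closed, and let `L` be a
finite-dimensional subspace of `H₂` with `L ⊆ dom T*`. Let `S : Lᗮ → H₁` be the restriction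
of `T*` with `dom S = dom T* ∩ Lᗮ`.  Then `S` is densely defined and closed, and its adjoint
`S* : H₁ → Lᗮ` satisfies `dom S* = dom T` and `S* f = P_{Lᗮ}(T f)` for all `f ∈ dom T`. -/
theorem adjointRestrict_adjoint
    {H₁ H₂ : Type*}
    [NormedAddCommGroup H₁] [InnerProductSpace ℂ H₁] [CompleteSpace H₁]
    [NormedAddCommGroup H₂] [InnerProductSpace ℂ H₂] [CompleteSpace H₂]
    (T : H₁ →ₗ.[ℂ] H₂) (hd : Dense (T.domain : Set H₁)) (hc : T.IsClosed)
    (L : Submodule ℂ H₂) [FiniteDimensional ℂ L] (hL : L ≤ T.adjoint.domain) :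
    Dense (((adjointRestrict T L).domain : Submodule ℂ ↥Lᗮ) : Set ↥Lᗮ) ∧
    (adjointRestrict T L).IsClosed ∧
    (adjointRestrict T L).adjoint.domain = T.domain ∧
    ∀ (f : H₁) (hf : f ∈ T.domain) (hf' : f ∈ (adjointRestrict T L).adjoint.domain),
      (adjointRestrict T L).adjoint ⟨f, hf'⟩ = Submodule.orthogonalProjectionOnto Lᗮ (T ⟨f, hf⟩) := by
  have : CompleteSpace L := FiniteDimensional.complete ℂ L
  exact adjointRestrict_adjoint_general T hd hc L hL
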